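/- Let P₀ be the 4 × 4 matrix over GF(4) with rows (α,α²,0,α), (α²,α,α²,0), (1,0,α,α²), (0,1,1,1), and let A = [I₄ | D₄ | P₀] be the 4 × 14 matrix over GF(4) obtained by placing the 4 × 4 identity matrix, the matrix D₄, and P₀ side by side. A field F realizes the column matroid of A if and only if F is infinite or has at least 4 elements. (The universal partial field of this matroid is the 2-regular partial field 𝕌₂.) -/

import Mathlib

/-- A field `F` realizes the column matroid of a matrix `A` over `K` if some matrix `B`
over `F` with the same column index set has exactly the same linearly independent sets
of columns as `A`. -/
def RealizesColumnMatroid {K : Type*} [Field K] {m k : ℕ}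
    (A : Matrix (Fin m) (Fin k) K) (F : Type*) [Field F] : Prop :=
  ∃ (n : ℕ) (B : Matrix (Fin n) (Fin k) F),
    ∀ S : Set (Fin k),
      LinearIndependent F (fun j : S => B.transpose (j : Fin k)) ↔
        LinearIndependent K (fun j : S => A.transpose (j : Fin k))

/-- The matrix `[I₄ | D₄ | P₀]` over `GF(4)`, where `D₄` is the (mod-2) signed incidence
matrix of `K₄` and `P₀` is matrix `XVII` of the paper. -/
noncomputable def matI4D4P0 (α : GaloisField 2 2) :
    Matrix (Fin 4) (Fin 14) (GaloisField 2 2) :=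
  !![1, 0, 0, 0,  1, 1, 1, 0, 0, 0,  α, α ^ 2, 0, α;
     0, 1, 0, 0,  1, 0, 0, 1, 1, 0,  α ^ 2, α, α ^ 2, 0;
     0, 0, 1, 0,  0, 1, 0, 1, 0, 1,  1, 0, α, α ^ 2;
     0, 0, 0, 1,  0, 0, 1, 0, 1, 1,  0, 1, 1, 1]

/-!
A row vector `y` and four distinct nodes `x` give four points `(x i, y i)` in the affine plane. Up
to scaling, the columns of `A = [I₄ | D₄ | P₀]` are the divided differences of orders `0`, `1` and
`2` at the nodes `1`, `0`, `α`, `α²`; hence the zero entries of `y ᵥ* A` record which of the points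
lie on the axis, which pairs have equal height and which triples are collinear. These incidences
carry over to any other four distinct nodes, in any field, by relabelling the heights: either every
collinear triple is horizontal, or three of the points lie on a sloped line and this line can be
sent to a sloped line. So the matroid does not depend on the nodes, and every field with at least
four elements realizes it. Conversely, contracting two elements of the matroid leaves a line with
five points, and a line over a field with `q` elements has only `q + 1` points.
-/

open Matrix Module

section Collinearity

variable {ι K L : Type*} [Field K] [Field L]

/-- Twice the signed area of the triangle with vertices `(x i, y i)`, `(x j, y j)`, `(x k, y k)`,
up to orientation; it vanishes iff these points are collinear. -/
def signedArea (x y : ι → K) (i j k : ι) : K :=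
  (x j - x k) * y i + (x k - x i) * y j + (x i - x j) * y k

theorem signedArea_rotate (x y : ι → K) (i j k : ι) :
    signedArea x y j k i = signedArea x y i j k := by
  simp only [signedArea]
  ring

theorem signedArea_affine_left (x y : ι → K) (c d : K) (i j k : ι) :
    signedArea (fun t => c + d * x t) y i j k = d * signedArea x y i j k := by
  simp only [signedArea]
  ring

theorem signedArea_eq_zero_of_eq_affine {x y : ι → K} {c d : K} {i j k : ι}
    (hi : y i = c + d * x i) (hj : y j = c + d * x j) (hk : y k = c + d * x k) :
    signedArea x y i j k = 0 := by
  simp only [signedArea, hi, hj, hk]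
  ring

theorem eq_affine_of_signedArea_eq_zero {x y : ι → K} {c d : K} {i j k : ι} (hij : x i ≠ x j)
    (h : signedArea x y i j k = 0) (hi : y i = c + d * x i) (hj : y j = c + d * x j) :
    y k = c + d * x k := by
  refine mul_left_cancel₀ (sub_ne_zero.2 hij) ?_
  simp only [signedArea, hi, hj] at h
  linear_combination h

theorem exists_eq_affine_of_signedArea_eq_zero {x y : ι → K} {i j k : ι} (hij : x i ≠ x j)
    (h : signedArea x y i j k = 0) :
    ∃ c d : K, y i = c + d * x i ∧ y j = c + d * x j ∧ y k = c + d * x k := by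
  obtain ⟨d, hd⟩ : ∃ d, y i - y j = d * (x i - x j) :=
    ⟨_, (div_mul_cancel₀ _ (sub_ne_zero.2 hij)).symm⟩
  have hi : y i = (y i - d * x i) + d * x i := by ring
  have hj : y j = (y i - d * x i) + d * x j := by linear_combination -hd
  exact ⟨_, d, hi, hj, eq_affine_of_signedArea_eq_zero hij h hi hj⟩

/-- Whenever three of the points `(x i, y i)` are collinear, so are the corresponding points
`(x' i, z i)`. -/
def CollinearityImp (x y : ι → K) (x' z : ι → L) : Prop :=
  ∀ ⦃i j k⦄, i ≠ j → i ≠ k → j ≠ k → signedArea x y i j k = 0 → signedArea x' z i j k = 0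

theorem CollinearityImp.of_affine_left {x y : ι → K} {x' z : ι → L} {c d : K}
    (h : CollinearityImp (fun t => c + d * x t) y x' z) : CollinearityImp x y x' z :=
  fun _ _ _ hij hik hjk hA => h hij hik hjk (by rw [signedArea_affine_left, hA, mul_zero])

theorem exists_comp_of_collinear_imp_eq {x y : ι → K} (x' : ι → L) (hy : y ≠ 0)
    (h : ∀ i j k, i ≠ j → i ≠ k → j ≠ k → signedArea x y i j k = 0 → y i = y j) :
    ∃ g : K → L, g 0 = 0 ∧ g ∘ y ≠ 0 ∧ CollinearityImp x y x' (g ∘ y) := by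
  classical
  obtain ⟨m, hm⟩ := Function.ne_iff.1 hy
  refine ⟨Pi.single (y m) 1, Pi.single_eq_of_ne hm.symm 1, Function.ne_iff.2 ⟨m, by simp⟩, ?_⟩
  intro i j k hij hik hjk hA
  have hyij : y i = y j := h i j k hij hik hjk hA
  have hyjk : y j = y k := h j k i hjk hij.symm hik.symm (by rwa [signedArea_rotate])
  simp only [signedArea, Function.comp_apply, hyij, hyjk]
  ring

theorem exists_comp_of_eqOn_compl {x y : ι → K} {x' : ι → L} (hx : x.Injective)
    (hx' : x'.Injective) {l : ι} (hl : ({l}ᶜ : Set ι).Nontrivial) (hy : ∀ t, t ≠ l → y t = x t) :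
    ∃ g : K → L, g 0 = 0 ∧ g ∘ y ≠ 0 ∧ CollinearityImp x y x' (g ∘ y) := by
  have : Nonempty ι := ⟨l⟩
  -- The relabelling `x i ↦ x' i`, which takes arbitrary values off the range of `x`.
  let r : K → L := x' ∘ x.invFun
  have hr (t : ι) : r (x t) = x' t := congrArg x' (Function.leftInverse_invFun hx t)
  have hline (t : ι) (ht : y t = x t) : r (y t) - r 0 = -r 0 + 1 * x' t := by
    rw [ht, hr]
    ring
  have hcol {i j k : ι} (hij : i ≠ j) (hik : i ≠ k) (hjk : j ≠ k)
      (hA : signedArea x y i j k = 0) : y k = x k := by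
    by_cases hkl : k = l
    · subst hkl
      simpa using eq_affine_of_signedArea_eq_zero (c := 0) (d := 1) (hx.ne hij) hA
        (by simpa using hy i hik) (by simpa using hy j hjk)
    · exact hy k hkl
  refine ⟨fun v => r v - r 0, sub_self _, ?_, ?_⟩
  · obtain ⟨_, ⟨t, ht, rfl⟩, hne⟩ := (hl.image hx').exists_ne (r 0)
    refine Function.ne_iff.2 ⟨t, ?_⟩
    rw [Function.comp_apply, hy t ht, hr]
    exact sub_ne_zero.2 hne
  · intro i j k hij hik hjk hA
    have hA' : signedArea x y j k i = 0 := by rwa [signedArea_rotate]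
    have hA'' : signedArea x y k i j = 0 := by rwa [signedArea_rotate]
    exact signedArea_eq_zero_of_eq_affine (hline i (hcol hjk hij.symm hik.symm hA'))
      (hline j (hcol hik.symm hjk.symm hij hA'')) (hline k (hcol hij hik hjk hA))

theorem exists_comp_collinearityImp {x : Fin 4 → K} {x' : Fin 4 → L} (hx : x.Injective)
    (hx' : x'.Injective) {y : Fin 4 → K} (hy : y ≠ 0) :
    ∃ g : K → L, g 0 = 0 ∧ g ∘ y ≠ 0 ∧ CollinearityImp x y x' (g ∘ y) := by
  by_cases h : ∀ i j k, i ≠ j → i ≠ k → j ≠ k → signedArea x y i j k = 0 → y i = y j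
  · exact exists_comp_of_collinear_imp_eq x' hy h
  push Not at h
  obtain ⟨i, j, k, hij, hik, hjk, hA, hyij⟩ := h
  obtain ⟨c, d, hi, hj, hk⟩ := exists_eq_affine_of_signedArea_eq_zero (hx.ne hij) hA
  have hd : d ≠ 0 := by
    rintro rfl
    exact hyij (by rw [hi, hj, zero_mul, zero_mul])
  obtain ⟨l, hl⟩ : ∃ l, ∀ t, t ≠ l → t = i ∨ t = j ∨ t = k := by
    clear! x y
    decide +revert
  have hline : ∀ t, t ≠ l → y t = c + d * x t := by
    intro t ht
    obtain rfl | rfl | rfl := hl t ht <;> assumption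
  have hinj : (fun t => c + d * x t).Injective :=
    (add_right_injective c).comp ((mul_right_injective₀ hd).comp hx)
  have hnontrivial : ({l}ᶜ : Set (Fin 4)).Nontrivial := by
    rw [← Set.one_lt_ncard_iff_nontrivial, Set.ncard_compl]
    simp
  obtain ⟨g, hg0, hgy, hg⟩ := exists_comp_of_eqOn_compl hinj hx' hnontrivial hline
  exact ⟨g, hg0, hgy, hg.of_affine_left⟩

end Collinearity

section Transfer

variable {m ι K L : Type*} [Field K] [Field L]

theorem linearIndependent_col_iff_rank_eq_card [Fintype ι] {A : Matrix m ι K} :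
    LinearIndependent K A.col ↔ A.rank = Fintype.card ι := by
  rw [linearIndependent_iff_card_eq_finrank_span, A.rank_eq_finrank_span_cols, Set.finrank,
    eq_comm]

variable [Fintype m]

theorem linearIndependent_row_iff_rank_eq_card [Fintype ι] {A : Matrix m ι K} :
    LinearIndependent K A.row ↔ A.rank = Fintype.card m := by
  rw [linearIndependent_iff_card_eq_finrank_span, A.rank_eq_finrank_span_row, Set.finrank, eq_comm]

theorem linearIndependent_row_of_vecMul_eq_zero_imp {A : Matrix m ι K} {B : Matrix m ι L}
    (hA : LinearIndependent K A.row)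
    (h : ∀ y : m → L, y ≠ 0 → ∃ z : m → K, z ≠ 0 ∧ ∀ j, (y ᵥ* B) j = 0 → (z ᵥ* A) j = 0) :
    LinearIndependent L B.row := by
  rw [← vecMul_injective_iff] at hA ⊢
  refine (injective_iff_map_eq_zero B.vecMulLinear).2 fun y hy => ?_
  by_contra hy0
  obtain ⟨z, hz0, hz⟩ := h y hy0
  exact hz0 ((injective_iff_map_eq_zero A.vecMulLinear).1 hA z
    (funext fun j => hz j (congrFun hy j)))

/- The zero sets of the row space are the complements of the unions of cocircuits, so the hypothesis
says that every hyperplane of the matroid of `B` lies in one of the matroid of `A`. -/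
theorem linearIndepOn_col_of_vecMul_eq_zero_imp [Finite ι] {A : Matrix m ι K} {B : Matrix m ι L}
    (hA : LinearIndependent K A.row)
    (h : ∀ y : m → L, y ≠ 0 → ∃ z : m → K, z ≠ 0 ∧ ∀ j, (y ᵥ* B) j = 0 → (z ᵥ* A) j = 0)
    {s : Set ι} (hs : LinearIndepOn K A.col s) : LinearIndepOn L B.col s := by
  have := Fintype.ofFinite ι
  obtain ⟨T, -, hsT, hspan, hT⟩ := exists_linearIndepOn_extension hs (Set.subset_univ s)
  have := Fintype.ofFinite T
  let A' := A.submatrix id ((↑) : T → ι)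
  let B' := B.submatrix id ((↑) : T → ι)
  have hcolA : LinearIndependent K A'.col := hT
  have hrank : A'.rank = A.rank := by
    have hrange : Set.range A'.col = A.col '' T := (Set.image_eq_range A.col T).symm
    rw [rank_eq_finrank_span_cols, rank_eq_finrank_span_cols, hrange, ← Set.image_univ,
      (Submodule.span_mono (Set.image_mono T.subset_univ)).antisymm (Submodule.span_le.2 hspan)]
  have hrowA : LinearIndependent K A'.row := by
    rw [linearIndependent_row_iff_rank_eq_card, hrank, hA.rank_matrix]
  have hrowB : LinearIndependent L B'.row :=
    linearIndependent_row_of_vecMul_eq_zero_imp hrowA fun y hy =>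
      (h y hy).imp fun _ hz => ⟨hz.1, fun j => hz.2 j⟩
  have hcolB : LinearIndependent L B'.col := by
    rw [linearIndependent_col_iff_rank_eq_card] at hcolA ⊢
    rw [← hcolA, hrowA.rank_matrix, hrowB.rank_matrix]
  exact LinearIndepOn.mono hcolB hsT

end Transfer

section Line

variable {ι F V : Type*} [Field F] [AddCommGroup V] [Module F V]

theorem ncard_le_natCard_add_one_of_finrank_eq_two [Finite F] {W : Submodule F V}
    (hW : finrank F W = 2) {v : ι → V} {t : Set ι} (ht : t.Nontrivial) (hmem : ∀ i ∈ t, v i ∈ W)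
    (hpair : t.Pairwise fun i j => LinearIndepOn F v {i, j}) :
    t.ncard ≤ Nat.card F + 1 := by
  have := Module.finite_of_finrank_pos (R := F) (M := W) (by lia)
  have : Finite W := Module.finite_of_finite F
  have hne (i : t) : v i ≠ 0 := by
    obtain ⟨j, hj, hji⟩ := ht.exists_ne i
    exact (hpair i.2 hj hji.symm).ne_zero (Set.mem_insert _ _)
  let w (i : t) : W := ⟨v i, hmem i i.2⟩
  have hw (i : t) : w i ≠ 0 := fun h => hne i (congrArg Subtype.val h)
  have hinj : (fun i : t => Projectivization.mk F (w i) (hw i)).Injective := by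
    intro i j hij
    by_contra hne_ij
    obtain ⟨c, hc⟩ := (Projectivization.mk_eq_mk_iff' F _ _ (hw i) (hw j)).1 hij
    have hji : (j : ι) ≠ i := fun h => hne_ij (Subtype.ext h.symm)
    exact (linearIndepOn_pair_iff v hji (hne j)).1 (hpair j.2 i.2 hji) c (congrArg Subtype.val hc)
  rw [← Projectivization.card_of_finrank_two F W hW]
  exact Nat.card_le_card_of_injective _ hinj

theorem ncard_le_natCard_add_one_of_pairwise_linearIndepOn [Finite F] {v : ι → V} {t : Set ι}
    (hpair : t.Pairwise fun i j => LinearIndepOn F v {i, j})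
    (hrank : ∀ s ⊆ t, LinearIndepOn F v s → s.encard ≤ 2) :
    t.ncard ≤ Nat.card F + 1 := by
  obtain ht | ht := t.subsingleton_or_nontrivial
  · have := ht.finite.to_subtype
    exact (Set.ncard_le_one_iff_subsingleton.2 ht).trans (Nat.le_add_left _ _)
  obtain ⟨i, hi, j, hj, hij⟩ := id ht
  have hind := hpair hi hj hij
  refine ncard_le_natCard_add_one_of_finrank_eq_two (W := Submodule.span F (v '' {i, j})) ?_ ht
    (fun k hk => ?_) hpair
  · have := Fintype.ofFinite ({i, j} : Set ι)
    rw [Set.image_eq_range, finrank_span_eq_card hind, ← Nat.card_eq_fintype_card,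
      Nat.card_coe_set_eq, Set.ncard_pair hij]
  · by_contra hspan
    obtain ⟨hkind, hkij⟩ := hind.notMem_span_iff.1 hspan
    have hcard := hrank _ (Set.insert_subset hk (Set.pair_subset hi hj)) hkind
    rw [Set.encard_insert_of_notMem hkij, Set.encard_pair hij] at hcard
    exact absurd hcard (by decide)

end Line

section Minor

variable {ι K : Type*} [Field K]

theorem linearIndepOn_col_of_minor_ne_zero {A : Matrix (Fin 4) ι K} {p q a b : ι}
    (hp : A.col p = Pi.single 0 1) (hq : A.col q = Pi.single 1 1)
    (h : A 2 a * A 3 b - A 3 a * A 2 b ≠ 0) :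
    LinearIndepOn K A.col ({p, q} ∪ {a, b}) := by
  have hdet : (A.submatrix id ![p, q, a, b]).det ≠ 0 := by
    have hp' (i : Fin 4) : A i p = Pi.single (M := fun _ => K) 0 1 i := congrFun hp i
    have hq' (i : Fin 4) : A i q = Pi.single (M := fun _ => K) 1 1 i := congrFun hq i
    convert h using 1
    simp [det_succ_column_zero, Fin.sum_univ_succ, hp', hq', Fin.succAbove, sub_eq_add_neg]
  have hind : LinearIndependent K (A.col ∘ ![p, q, a, b]) :=
    linearIndependent_cols_iff_isUnit.2 ((isUnit_iff_isUnit_det _).2 hdet.isUnit)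
  refine ((linearIndepOn_range_iff hind.injective.of_comp _).2 hind).mono ?_
  simp [Set.insert_subset_iff]

end Minor

section Realization

variable {K F : Type*} [Field K] [Field F] {m k : ℕ} {A : Matrix (Fin m) (Fin k) K}

theorem realizesColumnMatroid_mul_diagonal_iff {d : Fin k → K} (hd : ∀ j, d j ≠ 0) :
    RealizesColumnMatroid (A * diagonal d) F ↔ RealizesColumnMatroid A F := by
  have hcol (S : Set (Fin k)) :
      LinearIndepOn K (A * diagonal d).col S ↔ LinearIndepOn K A.col S := by
    rw [LinearIndepOn, LinearIndepOn,
      ← LinearIndependent.units_smul_iff (fun j : S => A.col j) fun j => .mk0 (d j) (hd j)]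
    have hsmul : (fun j : S => (A * diagonal d).col j) =
        (fun j : S => .mk0 (d j) (hd j) : S → Kˣ) • fun j : S => A.col j :=
      funext₂ fun j i => (mul_diagonal d A i j).trans (mul_comm _ _)
    rw [hsmul]
  exact exists_congr fun n => exists_congr fun B => forall_congr' fun S =>
    iff_congr Iff.rfl (hcol S)

theorem RealizesColumnMatroid.ncard_le_natCard_add_one [Finite F] (h : RealizesColumnMatroid A F)
    {s t : Set (Fin k)} (hst : Disjoint s t) (hs : LinearIndepOn K A.col s)
    (hm : m ≤ s.ncard + 2) (hpair : t.Pairwise fun i j => LinearIndepOn K A.col (s ∪ {i, j})) :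
    t.ncard ≤ Nat.card F + 1 := by
  obtain ⟨n, B, hB⟩ := h
  replace hB (S : Set (Fin k)) : LinearIndepOn F B.col S ↔ LinearIndepOn K A.col S := hB S
  -- Contracting `s` leaves the elements of `t` in a vector space where they span at most a plane.
  let v := (Submodule.span F (B.col '' s)).mkQ ∘ B.col
  have hv {u : Set (Fin k)} (hu : u ⊆ t) :
      LinearIndepOn F v u ↔ LinearIndepOn K A.col (s ∪ u) := by
    rw [← hB, ((hB s).2 hs).quotient_iff_union (hst.mono_right hu)]
  refine ncard_le_natCard_add_one_of_pairwise_linearIndepOn (v := v)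
    (fun i hi j hj hij => (hv (Set.pair_subset hi hj)).2 (hpair hi hj hij)) fun u hu hvu => ?_
  have hrank := ((hv hu).1 hvu).encard_le_toENat_rank
  rw [Set.encard_union_eq (hst.mono_right hu), ← s.toFinite.cast_ncard_eq,
    ← u.toFinite.cast_ncard_eq] at hrank
  rw [← u.toFinite.cast_ncard_eq]
  simp only [rank_fin_fun, map_natCast] at hrank
  norm_cast at hrank ⊢
  lia

end Realization

theorem exists_injective_fin_of_infinite_or_le_natCard {β : Type*} {n : ℕ}
    (h : Infinite β ∨ n ≤ Nat.card β) : ∃ x : Fin n → β, x.Injective := by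
  obtain hfin | hinf := finite_or_infinite β
  · have hn : n ≤ Nat.card β := h.resolve_left (not_infinite_iff_finite.2 hfin)
    exact ⟨_, (Finite.equivFin β).symm.injective.comp (Fin.castLE_injective hn)⟩
  · exact ⟨_, (Infinite.natEmbedding β).injective.comp Fin.val_injective⟩

section DividedDifference

variable {K L F : Type*} [Field K] [Field L] [Field F]

/-- The columns are, up to scaling, the divided differences at the nodes `x` on the index sets
`0`, `1`, `2`, `3`, `01`, `02`, `03`, `12`, `13`, `23`, `012`, `013`, `123`, `023`, the order in
which they occur in `matI4D4P0`. -/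
def dividedDifferenceMatrix (x : Fin 4 → K) : Matrix (Fin 4) (Fin 14) K :=
  !![1, 0, 0, 0,  1, 1, 1, 0, 0, 0,  x 1 - x 2, x 1 - x 3, 0, x 2 - x 3;
     0, 1, 0, 0,  -1, 0, 0, 1, 1, 0,  x 2 - x 0, x 3 - x 0, x 2 - x 3, 0;
     0, 0, 1, 0,  0, -1, 0, -1, 0, 1,  x 0 - x 1, 0, x 3 - x 1, x 3 - x 0;
     0, 0, 0, 1,  0, 0, -1, 0, -1, -1,  0, x 0 - x 1, x 1 - x 2, x 0 - x 2]

theorem vecMul_dividedDifferenceMatrix (x y : Fin 4 → K) :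
    y ᵥ* dividedDifferenceMatrix x = ![y 0, y 1, y 2, y 3,
      y 0 - y 1, y 0 - y 2, y 0 - y 3, y 1 - y 2, y 1 - y 3, y 2 - y 3,
      signedArea x y 0 1 2, signedArea x y 0 1 3, signedArea x y 1 2 3, signedArea x y 0 2 3] := by
  funext j
  fin_cases j <;>
    simp [dividedDifferenceMatrix, signedArea, vecMul, dotProduct, Fin.sum_univ_four] <;> ring

theorem linearIndependent_row_dividedDifferenceMatrix (x : Fin 4 → K) :
    LinearIndependent K (dividedDifferenceMatrix x).row := by
  rw [← vecMul_injective_iff]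
  intro y z hyz
  simp only [vecMul_dividedDifferenceMatrix] at hyz
  funext i
  fin_cases i
  · exact congrFun hyz 0
  · exact congrFun hyz 1
  · exact congrFun hyz 2
  · exact congrFun hyz 3

theorem exists_vecMul_dividedDifferenceMatrix_eq_zero_imp {x : Fin 4 → K} {x' : Fin 4 → L}
    (hx : x.Injective) (hx' : x'.Injective) {y : Fin 4 → K} (hy : y ≠ 0) :
    ∃ z : Fin 4 → L, z ≠ 0 ∧ ∀ j,
      (y ᵥ* dividedDifferenceMatrix x) j = 0 → (z ᵥ* dividedDifferenceMatrix x') j = 0 := by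
  obtain ⟨g, hg0, hgy, hg⟩ := exists_comp_collinearityImp hx hx' hy
  have hvalue (i : Fin 4) (h : y i = 0) : (g ∘ y) i = 0 := (congrArg g h).trans hg0
  have hdiff (i j : Fin 4) (h : y i - y j = 0) : (g ∘ y) i - (g ∘ y) j = 0 :=
    sub_eq_zero.2 (congrArg g (sub_eq_zero.1 h))
  refine ⟨g ∘ y, hgy, fun j => ?_⟩
  rw [vecMul_dividedDifferenceMatrix, vecMul_dividedDifferenceMatrix]
  fin_cases j
  all_goals first | exact hvalue _ | exact hdiff _ _ | exact hg (by decide) (by decide) (by decide)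

theorem linearIndepOn_col_dividedDifferenceMatrix_iff {x : Fin 4 → K} {x' : Fin 4 → L}
    (hx : x.Injective) (hx' : x'.Injective) {s : Set (Fin 14)} :
    LinearIndepOn K (dividedDifferenceMatrix x).col s ↔
      LinearIndepOn L (dividedDifferenceMatrix x').col s :=
  ⟨linearIndepOn_col_of_vecMul_eq_zero_imp (linearIndependent_row_dividedDifferenceMatrix x)
      fun _ => exists_vecMul_dividedDifferenceMatrix_eq_zero_imp hx' hx,
    linearIndepOn_col_of_vecMul_eq_zero_imp (linearIndependent_row_dividedDifferenceMatrix x')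
      fun _ => exists_vecMul_dividedDifferenceMatrix_eq_zero_imp hx hx'⟩

theorem pairwise_linearIndepOn_col_dividedDifferenceMatrix {x : Fin 4 → K} (hx : x.Injective) :
    ({2, 3, 9, 12, 13} : Set (Fin 14)).Pairwise fun a b =>
      LinearIndepOn K (dividedDifferenceMatrix x).col ({0, 1} ∪ {a, b}) := by
  have hminor : (x 3 - x 1) * (x 0 - x 2) ≠ (x 1 - x 2) * (x 3 - x 0) := by
    have hfactor : (x 3 - x 1) * (x 0 - x 2) - (x 1 - x 2) * (x 3 - x 0) =
        (x 3 - x 2) * (x 0 - x 1) := by ring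
    simp [← sub_ne_zero, hfactor, sub_eq_zero, hx.eq_iff]
  intro a ha b hb hab
  wlog hlt : a < b generalizing a b
  · rw [Set.pair_comm a b]
    exact this hb ha hab.symm (hab.symm.lt_of_le (not_lt.1 hlt))
  have hcol0 : (dividedDifferenceMatrix x).col 0 = Pi.single 0 1 := by
    funext i
    fin_cases i <;> rfl
  have hcol1 : (dividedDifferenceMatrix x).col 1 = Pi.single 1 1 := by
    funext i
    fin_cases i <;> rfl
  refine linearIndepOn_col_of_minor_ne_zero hcol0 hcol1 ?_
  obtain rfl | rfl | rfl | rfl | rfl := ha <;> obtain rfl | rfl | rfl | rfl | rfl := hb <;>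
    first
    | exact absurd hlt (by decide)
    | simp [dividedDifferenceMatrix, sub_eq_zero, hx.eq_iff, hminor]

theorem realizesColumnMatroid_dividedDifferenceMatrix_iff {x : Fin 4 → K} (hx : x.Injective) :
    RealizesColumnMatroid (dividedDifferenceMatrix x) F ↔ Infinite F ∨ 4 ≤ Nat.card F := by
  refine ⟨fun h => or_iff_not_imp_left.2 fun hF => ?_, fun h => ?_⟩
  · have := not_infinite_iff_finite.1 hF
    have hpair := pairwise_linearIndepOn_col_dividedDifferenceMatrix hx
    have hcard := h.ncard_le_natCard_add_one (s := {0, 1}) (by simp)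
      ((hpair (by simp) (by simp) (by decide : (2 : Fin 14) ≠ 3)).mono Set.subset_union_left)
      (by simp) hpair
    have hncard : ({2, 3, 9, 12, 13} : Set (Fin 14)).ncard = 5 := by
      rw [Set.ncard_eq_toFinset_card']
      rfl
    lia
  · obtain ⟨x', hx'⟩ := exists_injective_fin_of_infinite_or_le_natCard h
    exact ⟨4, dividedDifferenceMatrix x', fun _ =>
      linearIndepOn_col_dividedDifferenceMatrix_iff hx' hx⟩

end DividedDifference

theorem matI4D4P0_eq_dividedDifferenceMatrix_mul_diagonal {α : GaloisField 2 2}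
    (hα : α ^ 2 = α + 1) :
    matI4D4P0 α = dividedDifferenceMatrix ![1, 0, α, α ^ 2] *
      diagonal ![1, 1, 1, 1, 1, 1, 1, 1, 1, 1, 1, 1, α ^ 2, α] := by
  have : (2 : GaloisField 2 2) = 0 := CharTwo.two_eq_zero
  ext i j
  rw [mul_diagonal]
  fin_cases i <;> fin_cases j <;> simp [matI4D4P0, dividedDifferenceMatrix] <;> grind

/-- A field `F` realizes the column matroid of `[I₄ | D₄ | P₀]` iff `F` is infinite or
has at least 4 elements (the universal partial field of this matroid is the 2-regular
partial field `𝕌₂`). -/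
theorem stmt_18 (α : GaloisField 2 2) (hα : α ^ 2 = α + 1) (F : Type*) [Field F] :
    RealizesColumnMatroid (matI4D4P0 α) F ↔ (Infinite F ∨ 4 ≤ Nat.card F) := by
  have : (2 : GaloisField 2 2) = 0 := CharTwo.two_eq_zero
  have hα0 : α ≠ 0 := by grind
  have hnodes : (![1, 0, α, α ^ 2] : Fin 4 → GaloisField 2 2).Injective := by
    intro i j
    fin_cases i <;> fin_cases j <;> simp <;> grind
  have hscale (j : Fin 14) :
      (![1, 1, 1, 1, 1, 1, 1, 1, 1, 1, 1, 1, α ^ 2, α] : Fin 14 → GaloisField 2 2) j ≠ 0 := by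
    fin_cases j <;> simp [hα0]
  rw [matI4D4P0_eq_dividedDifferenceMatrix_mul_diagonal hα,
    realizesColumnMatroid_mul_diagonal_iff hscale,
    realizesColumnMatroid_dividedDifferenceMatrix_iff hnodes]
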